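/- Let q ∈ L¹[0,1] be a real-valued integrable function and let t ∈ [0,2π) be fixed. If for every n ∈ ℕ (n ≥ 1) the number (2nπ − t)² is an eigenvalue of the quasi-periodic problem L_t(q), then ∫₀¹ q(x) dx = 0. -/

import Mathlib

open MeasureTheory Set

/-- `IsQPEigenpair q t lam y g h` says that `y` (with first derivative `g` and
second derivative `h`) is an eigenfunction of the quasi-periodic problem
`L_t(q)` on `[0,1]` with eigenvalue `lam`: `y` is nonzero, continuously
differentiable on `[0,1]` with derivative `g`, `g` is absolutely continuous
with a.e. derivative `h` (encoded via the fundamental theorem of calculus with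
`h` integrable), the equation `-y'' + q y = lam y` holds a.e. on `[0,1]`, and
the quasi-periodic boundary conditions hold. -/
def IsQPEigenpair (q : ℝ → ℝ) (t : ℝ) (lam : ℂ) (y g h : ℝ → ℂ) : Prop :=
  (∃ x ∈ Icc (0:ℝ) 1, y x ≠ 0) ∧
  (∀ x ∈ Icc (0:ℝ) 1, HasDerivWithinAt y (g x) (Icc (0:ℝ) 1) x) ∧
  ContinuousOn g (Icc (0:ℝ) 1) ∧
  IntegrableOn h (Icc (0:ℝ) 1) ∧
  (∀ x ∈ Icc (0:ℝ) 1, g x = g 0 + ∫ s in (0:ℝ)..x, h s) ∧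
  (∀ᵐ x ∂(volume.restrict (Icc (0:ℝ) 1)), -h x + (q x : ℂ) * y x = lam * y x) ∧
  y 1 = Complex.exp (Complex.I * t) * y 0 ∧
  g 1 = Complex.exp (Complex.I * t) * g 0

/-- `lam` is an eigenvalue of the quasi-periodic problem `L_t(q)`. -/
def IsQPEigenvalue (q : ℝ → ℝ) (t : ℝ) (lam : ℂ) : Prop :=
  ∃ y g h : ℝ → ℂ, IsQPEigenpair q t lam y g h

open Filter Topology

/-- The primitive of an integrable complex-valued function is absolutely continuous. -/
theorem absolutelyContinuousOnInterval_integral_complex {f : ℝ → ℂ} {a b : ℝ}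
    (hf : IntervalIntegrable f volume a b) :
    AbsolutelyContinuousOnInterval (fun x => ∫ s in a..x, f s) a b := by
  have hre : IntervalIntegrable (fun x => (f x).re) volume a b := ⟨hf.1.re, hf.2.re⟩
  have him : IntervalIntegrable (fun x => (f x).im) volume a b := ⟨hf.1.im, hf.2.im⟩
  have hconst (z : ℂ) : AbsolutelyContinuousOnInterval (fun _ : ℝ => z) a b :=
    ContDiffOn.absolutelyContinuousOnInterval contDiffOn_const
  have hac := ((hre.absolutelyContinuousOnInterval_intervalIntegral (c := a) (by simp)).smul
    (hconst 1)).add ((him.absolutelyContinuousOnInterval_intervalIntegral (c := a)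
      (by simp)).smul (hconst Complex.I))
  rw [absolutelyContinuousOnInterval_iff] at hac ⊢
  have key (x : ℝ) (hx : x ∈ uIcc a b) : ∫ s in a..x, f s =
      (((∫ s in a..x, (f s).re) : ℝ) : ℂ) + ((∫ s in a..x, (f s).im) : ℝ) * Complex.I := by
    rw [← intervalIntegral.integral_ofReal, ← intervalIntegral.integral_ofReal,
      ← intervalIntegral.integral_mul_const, ← intervalIntegral.integral_add]
    · simp [Complex.re_add_im]
    · have := hre.mono_set (uIcc_subset_uIcc_left hx)
      exact ⟨this.1.ofReal, this.2.ofReal⟩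
    · have := him.mono_set (uIcc_subset_uIcc_left hx)
      exact IntervalIntegrable.mul_const ⟨this.1.ofReal, this.2.ofReal⟩ _
  intro ε hε
  obtain ⟨δ, hδ, H⟩ := hac ε hε
  refine ⟨δ, hδ, fun E hE hlen => ?_⟩
  convert! H E hE hlen using 1
  refine Finset.sum_congr rfl fun i hi => ?_
  have hmem := hE.1 i hi
  rw [key _ hmem.1, key _ hmem.2]
  simp

/-- Product rule for the primitive of an integrable function and a continuously differentiable
function. -/
theorem add_integral_mul_eq_add_integral {f E : ℝ → ℂ} {b : ℝ} (c : ℂ)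
    (hf : IntervalIntegrable f volume 0 b) (hE : ContDiff ℝ 1 E) :
    (c + ∫ s in (0:ℝ)..b, f s) * E b = c * E 0 +
      ∫ x in (0:ℝ)..b, (f x * E x + (c + ∫ s in (0:ℝ)..x, f s) * deriv E x) := by
  have hE' : Continuous (deriv E) := hE.continuous_deriv_one
  have hconst : AbsolutelyContinuousOnInterval (fun _ : ℝ => c) 0 b :=
    ContDiffOn.absolutelyContinuousOnInterval contDiffOn_const
  have hF : AbsolutelyContinuousOnInterval (fun x => c + ∫ s in (0:ℝ)..x, f s) 0 b :=
    hconst.add (absolutelyContinuousOnInterval_integral_complex hf)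
  have hFE : AbsolutelyContinuousOnInterval (fun x => (c + ∫ s in (0:ℝ)..x, f s) * E x) 0 b :=
    hF.smul (ContDiffOn.absolutelyContinuousOnInterval hE.contDiffOn)
  have hint : IntervalIntegrable
      (fun x => f x * E x + (c + ∫ s in (0:ℝ)..x, f s) * deriv E x) volume 0 b :=
    (hf.mul_continuousOn hE.continuous.continuousOn).add
      (hF.continuousOn.mul hE'.continuousOn).intervalIntegrable
  obtain ⟨C, hC⟩ := (hFE.sub
    (absolutelyContinuousOnInterval_integral_complex hint)).const_of_ae_hasDerivAt_zero (by
      filter_upwards [hf.ae_hasDerivAt_integral, hint.ae_hasDerivAt_integral] with x h₁ h₂ hx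
      have hd := (((h₁ hx 0 (by simp)).const_add c).mul
        (hE.differentiable one_ne_zero x).hasDerivAt).sub (h₂ hx 0 (by simp))
      rw [sub_self] at hd
      exact hd)
  have h0 := hC 0 (by simp)
  have hb := hC b (by simp)
  simp only [Pi.sub_apply, intervalIntegral.integral_same, add_zero, sub_zero] at h0 hb
  rw [← h0] at hb
  linear_combination hb

/-- Integral representation of `y' + μ y` when `y'' = (q + μ²) y`. -/
theorem IsQPEigenpair.deriv_add_mul_eq {q : ℝ → ℝ} {t : ℝ} {lam μ : ℂ} {y g h : ℝ → ℂ}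
    (hy : IsQPEigenpair q t lam y g h) (hμ : μ ^ 2 = -lam) {x : ℝ} (hx : x ∈ Icc (0:ℝ) 1) :
    g x + μ * y x = Complex.exp (μ * x) * (g 0 + μ * y 0 +
      ∫ s in (0:ℝ)..x, (q s : ℂ) * y s * Complex.exp (-μ * s)) := by
  obtain ⟨-, hyg, hg, hh, hgh, hode, -, -⟩ := hy
  have hsub {x : ℝ} (hx : x ∈ Icc (0:ℝ) 1) : uIcc 0 x ⊆ Icc (0:ℝ) 1 := by
    rw [uIcc_of_le hx.1]; exact Icc_subset_Icc_right hx.2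
  have hhi {x : ℝ} (hx : x ∈ Icc (0:ℝ) 1) : IntervalIntegrable h volume 0 x :=
    (hh.mono_set (hsub hx)).intervalIntegrable
  have hgi {x : ℝ} (hx : x ∈ Icc (0:ℝ) 1) : IntervalIntegrable g volume 0 x :=
    (hg.mono (hsub hx)).intervalIntegrable
  have hyint {x : ℝ} (hx : x ∈ Icc (0:ℝ) 1) : ∫ s in (0:ℝ)..x, g s = y x - y 0 := by
    refine intervalIntegral.integral_eq_sub_of_hasDerivAt_of_le hx.1 ?_ ?_ (hgi hx)
    · exact fun z hz => ((hyg z ⟨hz.1, hz.2.trans hx.2⟩).continuousWithinAt).mono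
        (Icc_subset_Icc_right hx.2)
    · exact fun z hz => (hyg z ⟨hz.1.le, hz.2.le.trans hx.2⟩).hasDerivAt
        (Icc_mem_nhds hz.1 (hz.2.trans_le hx.2))
  have hF {x : ℝ} (hx : x ∈ Icc (0:ℝ) 1) :
      (g 0 + μ * y 0) + ∫ s in (0:ℝ)..x, (h s + μ * g s) = g x + μ * y x := by
    rw [intervalIntegral.integral_add (hhi hx) ((hgi hx).const_mul μ),
      intervalIntegral.integral_const_mul, hyint hx, hgh x hx]
    ring
  have hE : ContDiff ℝ 1 (fun s : ℝ => Complex.exp (-μ * s)) :=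
    (contDiff_const.mul Complex.ofRealCLM.contDiff).cexp
  have hE' (s : ℝ) : deriv (fun s : ℝ => Complex.exp (-μ * s)) s
      = -μ * Complex.exp (-μ * s) := by
    have := (((hasDerivAt_id s).ofReal_comp).const_mul (-μ)).cexp
    simpa [mul_comm] using this.deriv
  have hprod := add_integral_mul_eq_add_integral (g 0 + μ * y 0)
    ((hhi hx).add ((hgi hx).const_mul μ)) hE
  rw [hF hx] at hprod
  have hcongr : ∫ s in (0:ℝ)..x, ((h s + μ * g s) * Complex.exp (-μ * s) +
      ((g 0 + μ * y 0) + ∫ r in (0:ℝ)..s, (h r + μ * g r)) *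
        deriv (fun s : ℝ => Complex.exp (-μ * s)) s) =
      ∫ s in (0:ℝ)..x, (q s : ℂ) * y s * Complex.exp (-μ * s) := by
    refine intervalIntegral.integral_congr_ae ?_
    filter_upwards [(ae_restrict_iff' measurableSet_Icc).1 hode] with s hs hsx
    have hs1 : s ∈ Icc (0:ℝ) 1 := hsub hx (uIoc_subset_uIcc hsx)
    rw [hF hs1, hE']
    linear_combination (-Complex.exp (-μ * s)) * hs hs1 - (y s * Complex.exp (-μ * s)) * hμ
  rw [hcongr] at hprod
  have hexp : Complex.exp (μ * x) * Complex.exp (-μ * x) = 1 := by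
    rw [← Complex.exp_add]; simp
  simp only [Complex.ofReal_zero, mul_zero, Complex.exp_zero, mul_one] at hprod
  rw [← hprod]
  linear_combination (-(g x + μ * y x)) * hexp

theorem norm_exp_I_mul_ofReal_mul (ω x : ℝ) : ‖Complex.exp (Complex.I * ω * x)‖ = 1 := by
  rw [show Complex.I * (ω:ℂ) * x = ((ω * x : ℝ) : ℂ) * Complex.I by push_cast; ring]
  exact Complex.norm_exp_ofReal_mul_I _

section Estimates

variable {q : ℝ → ℝ} {y : ℝ → ℂ} {M : ℝ}

theorem norm_integral_mul_exp_le (hq : IntervalIntegrable q volume 0 1)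
    (hM : ∀ x ∈ Icc (0:ℝ) 1, ‖y x‖ ≤ M) (ω : ℝ) {x : ℝ} (hx : x ∈ Icc (0:ℝ) 1) :
    ‖∫ s in (0:ℝ)..x, (q s : ℂ) * y s * Complex.exp (-(Complex.I * ω) * s)‖
      ≤ M * ∫ s in (0:ℝ)..1, |q s| := by
  have hM0 : 0 ≤ M := (norm_nonneg _).trans (hM x hx)
  have hi : IntervalIntegrable (fun s => M * |q s|) volume 0 1 := hq.abs.const_mul M
  have hsub : uIcc 0 x ⊆ uIcc (0:ℝ) 1 := by
    rw [uIcc_of_le hx.1, uIcc_of_le zero_le_one]; exact Icc_subset_Icc_right hx.2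
  calc _ ≤ ∫ s in (0:ℝ)..x, M * |q s| := by
        refine intervalIntegral.norm_integral_le_of_norm_le hx.1 (ae_of_all _ fun s hs => ?_)
          (hi.mono_set hsub)
        have := norm_exp_I_mul_ofReal_mul (-ω) s
        rw [show -(Complex.I * (ω:ℂ)) * s = Complex.I * ((-ω : ℝ):ℂ) * s by push_cast; ring,
          norm_mul, norm_mul, this, mul_one, mul_comm M, Complex.norm_real, Real.norm_eq_abs]
        exact mul_le_mul_of_nonneg_left (hM s ⟨hs.1.le, hs.2.trans hx.2⟩) (abs_nonneg _)
    _ ≤ ∫ s in (0:ℝ)..1, M * |q s| :=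
        intervalIntegral.integral_mono_interval le_rfl hx.1 hx.2
          (ae_of_all _ fun s => mul_nonneg hM0 (abs_nonneg _)) hi
    _ = _ := intervalIntegral.integral_const_mul _ _

/-- Approximation of the Fourier-type integral of `q y` when `y` solves the integral equation
obtained by variation of parameters. -/
theorem norm_integral_sub_le (hq : IntervalIntegrable q volume 0 1)
    (hyc : ContinuousOn y (Icc 0 1)) (hM : ∀ x ∈ Icc (0:ℝ) 1, ‖y x‖ ≤ M) (ω : ℝ) (u v : ℂ)
    (hrep : ∀ x ∈ Icc (0:ℝ) 1, 2 * (Complex.I * ω) * y x =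
      Complex.exp (Complex.I * ω * x) *
        (u + ∫ s in (0:ℝ)..x, (q s : ℂ) * y s * Complex.exp (-(Complex.I * ω) * s)) -
      Complex.exp (-(Complex.I * ω) * x) *
        (v + ∫ s in (0:ℝ)..x, (q s : ℂ) * y s * Complex.exp (Complex.I * ω * s))) :
    ‖2 * (Complex.I * ω) *
        (∫ s in (0:ℝ)..1, (q s : ℂ) * y s * Complex.exp (-(Complex.I * ω) * s)) -
      (u * (∫ s in (0:ℝ)..1, (q s : ℂ)) -
        v * ∫ s in (0:ℝ)..1, (q s : ℂ) * Complex.exp (Complex.I * ((-(2 * ω) : ℝ) : ℂ) * s))‖ ≤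
      2 * M * (∫ s in (0:ℝ)..1, |q s|) ^ 2 := by
  set K := ∫ s in (0:ℝ)..1, |q s|
  have hqc : IntervalIntegrable (fun s => (q s : ℂ)) volume 0 1 :=
    ⟨hq.1.ofReal, hq.2.ofReal⟩
  have h1 : IntervalIntegrable
      (fun s => (q s : ℂ) * y s * Complex.exp (-(Complex.I * ω) * s)) volume 0 1 := by
    refine (hqc.mul_continuousOn ?_).mul_continuousOn (by fun_prop)
    rwa [uIcc_of_le zero_le_one]
  have h2 : IntervalIntegrable
      (fun s => (q s : ℂ) * Complex.exp (Complex.I * ((-(2 * ω) : ℝ) : ℂ) * s)) volume 0 1 :=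
    hqc.mul_continuousOn (by fun_prop)
  rw [← intervalIntegral.integral_const_mul, ← intervalIntegral.integral_const_mul,
    ← intervalIntegral.integral_const_mul,
    ← intervalIntegral.integral_sub (hqc.const_mul u) (h2.const_mul v),
    ← intervalIntegral.integral_sub (h1.const_mul _) ((hqc.const_mul u).sub (h2.const_mul v))]
  have hbound : ∫ s in (0:ℝ)..1, (2 * M * K) * |q s| = 2 * M * K ^ 2 := by
    rw [intervalIntegral.integral_const_mul]; ring
  rw [← hbound]
  refine intervalIntegral.norm_integral_le_of_norm_le zero_le_one (ae_of_all _ fun x hx => ?_)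
    (hq.abs.const_mul _)
  have hx' : x ∈ Icc (0:ℝ) 1 := ⟨hx.1.le, hx.2⟩
  have hU := norm_integral_mul_exp_le hq hM ω hx'
  have hV := norm_integral_mul_exp_le hq hM (-ω) hx'
  simp only [Complex.ofReal_neg, mul_neg, neg_neg] at hV
  set U := ∫ s in (0:ℝ)..x, (q s : ℂ) * y s * Complex.exp (-(Complex.I * ω) * s)
  set V := ∫ s in (0:ℝ)..x, (q s : ℂ) * y s * Complex.exp (Complex.I * ω * s)
  have he1 : Complex.exp (Complex.I * ω * x) * Complex.exp (-(Complex.I * ω) * x) = 1 := by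
    rw [← Complex.exp_add]; simp
  have he2 : Complex.exp (-(Complex.I * ω) * x) * Complex.exp (-(Complex.I * ω) * x) =
      Complex.exp (Complex.I * ((-(2 * ω) : ℝ) : ℂ) * x) := by
    rw [← Complex.exp_add]; congr 1; push_cast; ring
  have hn := norm_exp_I_mul_ofReal_mul (-(2 * ω)) x
  set W := Complex.exp (Complex.I * ((-(2 * ω) : ℝ) : ℂ) * x)
  have heq : 2 * (Complex.I * ω) * ((q x : ℂ) * y x * Complex.exp (-(Complex.I * ω) * x)) -
      (u * (q x : ℂ) - v * ((q x : ℂ) * W)) = (U - W * V) * q x := by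
    linear_combination (q x : ℂ) * Complex.exp (-(Complex.I * ω) * x) * hrep x hx' +
      (q x : ℂ) * (u + U) * he1 - (q x : ℂ) * (v + V) * he2
  rw [heq, norm_mul, Complex.norm_real, Real.norm_eq_abs]
  refine mul_le_mul_of_nonneg_right ?_ (abs_nonneg _)
  calc ‖U - W * V‖ ≤ ‖U‖ + ‖W * V‖ := norm_sub_le _ _
    _ = ‖U‖ + ‖V‖ := by rw [norm_mul, hn, one_mul]
    _ ≤ 2 * M * K := by linarith

end Estimates

/-- Quantitative bound for the mean value of `q` when `ω²` is an eigenvalue of `L_t(q)` and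
`exp(-iωx)` satisfies the quasi-periodic boundary conditions. -/
theorem IsQPEigenvalue.norm_integral_le {q : ℝ → ℝ} (hq : IntervalIntegrable q volume 0 1)
    {t ω : ℝ} (hω : 0 < ω) (hωK : 2 * ∫ s in (0:ℝ)..1, |q s| ≤ ω)
    (hωt : Complex.exp (Complex.I * ω) * Complex.exp (Complex.I * t) = 1)
    (hQ : ‖∫ s in (0:ℝ)..1, (q s : ℂ)‖ ≤ ‖(∫ s in (0:ℝ)..1, (q s : ℂ)) -
      2 * (Complex.I * ω) * (Complex.exp (Complex.I * t) ^ 2 - 1)‖)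
    (hev : IsQPEigenvalue q t ((ω ^ 2 : ℝ) : ℂ)) :
    ‖∫ s in (0:ℝ)..1, (q s : ℂ)‖ ≤
      ‖∫ s in (0:ℝ)..1, (q s : ℂ) * Complex.exp (Complex.I * ((2 * ω : ℝ) : ℂ) * s)‖ +
      ‖∫ s in (0:ℝ)..1, (q s : ℂ) * Complex.exp (Complex.I * ((-(2 * ω) : ℝ) : ℂ) * s)‖ +
      4 * (∫ s in (0:ℝ)..1, |q s|) ^ 2 / ω := by
  obtain ⟨y, g, h, hy⟩ := hev
  have hyc : ContinuousOn y (Icc 0 1) := fun x hx => (hy.2.1 x hx).continuousWithinAt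
  obtain ⟨x₀, hx₀, hmax⟩ := isCompact_Icc.exists_isMaxOn (nonempty_Icc.2 zero_le_one) hyc.norm
  have hM : ∀ x ∈ Icc (0:ℝ) 1, ‖y x‖ ≤ ‖y x₀‖ := fun x hx => hmax hx
  have hMpos : 0 < ‖y x₀‖ := by
    obtain ⟨x, hx, hne⟩ := hy.1
    exact (norm_pos_iff.2 hne).trans_le (hM x hx)
  have hrepU (x : ℝ) (hx : x ∈ Icc (0:ℝ) 1) :=
    hy.deriv_add_mul_eq (μ := Complex.I * ω) (by simp [mul_pow]) hx
  have hrepV (x : ℝ) (hx : x ∈ Icc (0:ℝ) 1) :=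
    hy.deriv_add_mul_eq (μ := -(Complex.I * ω)) (by simp [mul_pow]) hx
  obtain ⟨-, -, -, -, -, -, hy1, hg1⟩ := hy
  set u := g 0 + Complex.I * ω * y 0 with hu
  set v := g 0 + -(Complex.I * ω) * y 0 with hv
  simp only [neg_neg] at hrepV
  have hrep (x : ℝ) (hx : x ∈ Icc (0:ℝ) 1) : 2 * (Complex.I * ω) * y x =
      Complex.exp (Complex.I * ω * x) *
        (u + ∫ s in (0:ℝ)..x, (q s : ℂ) * y s * Complex.exp (-(Complex.I * ω) * s)) -
      Complex.exp (-(Complex.I * ω) * x) *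
        (v + ∫ s in (0:ℝ)..x, (q s : ℂ) * y s * Complex.exp (Complex.I * ω * s)) := by
    rw [← hrepU x hx, ← hrepV x hx]; ring
  have hone : (1:ℝ) ∈ Icc (0:ℝ) 1 := by simp
  have hU1 := hrepU 1 hone
  have hV1 := hrepV 1 hone
  have hexp : Complex.exp (Complex.I * ω) * Complex.exp (-(Complex.I * ω)) = 1 := by
    rw [← Complex.exp_add]; simp
  have hA := norm_integral_sub_le hq hyc hM ω u v hrep
  have hB := norm_integral_sub_le hq hyc hM (-ω) v u (fun x hx => by
    simp only [Complex.ofReal_neg, mul_neg, neg_neg]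
    linear_combination -hrep x hx)
  have hU0 := norm_integral_mul_exp_le hq hM ω hx₀
  have hV0 := norm_integral_mul_exp_le hq hM (-ω) hx₀
  simp only [Complex.ofReal_neg, mul_neg, neg_neg] at hB hV0
  have hrep0 := hrep x₀ hx₀
  have hn1 := norm_exp_I_mul_ofReal_mul ω x₀
  have hn2 := norm_exp_I_mul_ofReal_mul (-ω) x₀
  simp only [Complex.ofReal_neg, mul_neg] at hn2
  set K := ∫ s in (0:ℝ)..1, |q s|
  set Q := ∫ s in (0:ℝ)..1, (q s : ℂ)
  set U₁ := ∫ s in (0:ℝ)..1, (q s : ℂ) * y s * Complex.exp (-(Complex.I * ω) * s)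
  set V₁ := ∫ s in (0:ℝ)..1, (q s : ℂ) * y s * Complex.exp (Complex.I * ω * s)
  set U₀ := ∫ s in (0:ℝ)..x₀, (q s : ℂ) * y s * Complex.exp (-(Complex.I * ω) * s)
  set V₀ := ∫ s in (0:ℝ)..x₀, (q s : ℂ) * y s * Complex.exp (Complex.I * ω * s)
  set M := ‖y x₀‖
  have hU1' : U₁ = (Complex.exp (Complex.I * t) ^ 2 - 1) * u := by
    simp only [Complex.ofReal_one, mul_one] at hU1
    rw [hy1, hg1] at hU1
    linear_combination (-Complex.exp (Complex.I * t)) * hU1 -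
      (u + U₁) * hωt + Complex.exp (Complex.I * t) ^ 2 * hu
  have hV1' : V₁ = 0 := by
    simp only [Complex.ofReal_one, mul_one] at hV1
    rw [hy1, hg1] at hV1
    linear_combination (-Complex.exp (Complex.I * ω)) * hV1 - (v + V₁) * hexp + v * hωt -
      Complex.exp (Complex.I * ω) * Complex.exp (Complex.I * t) * hv
  have hMS : ω * M ≤ ‖u‖ + ‖v‖ := by
    have hnorm := congrArg norm hrep0
    rw [norm_mul, norm_mul, norm_mul, Complex.norm_I, Complex.norm_real, Real.norm_eq_abs,
      abs_of_pos hω, Complex.norm_ofNat, one_mul] at hnorm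
    have h1 := norm_sub_le (Complex.exp (Complex.I * ω * x₀) * (u + U₀))
      (Complex.exp (-(Complex.I * ω) * x₀) * (v + V₀))
    rw [norm_mul, norm_mul, hn1, hn2, one_mul, one_mul] at h1
    have h2 := norm_add_le u U₀
    have h3 := norm_add_le v V₀
    have h4 := mul_le_mul_of_nonneg_left hωK hMpos.le
    linarith
  have hSpos : 0 < ‖u‖ + ‖v‖ := (mul_pos hω hMpos).trans_le hMS
  set Rn := ∫ s in (0:ℝ)..1, (q s : ℂ) * Complex.exp (Complex.I * ((-(2 * ω) : ℝ) : ℂ) * s)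
  set Rp := ∫ s in (0:ℝ)..1, (q s : ℂ) * Complex.exp (Complex.I * ((2 * ω : ℝ) : ℂ) * s)
  rw [hU1'] at hA
  rw [hV1', mul_zero, zero_sub, norm_neg] at hB
  have hA' : ‖u‖ * ‖Q‖ ≤ ‖v‖ * ‖Rn‖ + 2 * M * K ^ 2 := by
    refine (mul_le_mul_of_nonneg_left hQ (norm_nonneg u)).trans ?_
    rw [← norm_mul, ← norm_mul]
    refine le_trans ?_ (add_le_add_right hA _)
    refine le_trans (le_of_eq ?_) (norm_sub_le _ _)
    congr 1
    ring
  have hB' : ‖v‖ * ‖Q‖ ≤ ‖u‖ * ‖Rp‖ + 2 * M * K ^ 2 := by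
    rw [← norm_mul, ← norm_mul]
    refine le_trans ?_ (add_le_add_right hB _)
    refine le_trans (le_of_eq ?_) (norm_add_le _ _)
    congr 1
    ring
  have hMK : 4 * M * K ^ 2 ≤ (‖u‖ + ‖v‖) * (4 * K ^ 2 / ω) := by
    rw [mul_div_assoc', le_div_iff₀ hω]
    nlinarith [mul_le_mul_of_nonneg_right hMS (by positivity : 0 ≤ 4 * K ^ 2)]
  refine le_of_mul_le_mul_left ?_ hSpos
  nlinarith [mul_nonneg (norm_nonneg u) (norm_nonneg Rn),
    mul_nonneg (norm_nonneg v) (norm_nonneg Rp)]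

/-- The Riemann–Lebesgue lemma on the unit interval. -/
theorem tendsto_integral_mul_exp_cocompact (q : ℝ → ℝ) :
    Tendsto (fun w : ℝ => ∫ s in (0:ℝ)..1, (q s : ℂ) * Complex.exp (Complex.I * w * s))
      (cocompact ℝ) (𝓝 0) := by
  have hRL := Real.tendsto_integral_exp_smul_cocompact
    ((Ioc (0:ℝ) 1).indicator fun s => (q s : ℂ))
  have hc : (-(2 * Real.pi))⁻¹ ≠ 0 := inv_ne_zero (by simp [Real.pi_ne_zero])
  have hscale : Tendsto (fun w : ℝ => (-(2 * Real.pi))⁻¹ * w) (cocompact ℝ) (cocompact ℝ) :=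
    (Homeomorph.mulLeft₀ _ hc).isClosedEmbedding.tendsto_cocompact
  refine (hRL.comp hscale).congr fun w => ?_
  rw [Function.comp_apply, intervalIntegral.integral_of_le zero_le_one,
    ← integral_indicator measurableSet_Ioc]
  refine integral_congr_ae (ae_of_all _ fun s => ?_)
  by_cases hs : s ∈ Ioc (0:ℝ) 1
  · simp only [indicator_of_mem hs, Circle.smul_def, Real.fourierChar_apply, smul_eq_mul]
    rw [mul_comm]
    congr 2
    have : (Real.pi : ℂ) ≠ 0 := by exact_mod_cast Real.pi_ne_zero
    push_cast
    field_simp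
  · simp [indicator_of_notMem hs]

/-- If `(2nπ − t)²` is an eigenvalue of `L_t(q)` for every `n ≥ 1`, then the
mean value of the potential vanishes: `∫₀¹ q = 0`. -/
theorem meanValue_eq_zero_of_spectrum
    (q : ℝ → ℝ) (hq : IntegrableOn q (Icc (0:ℝ) 1))
    (t : ℝ) (ht : t ∈ Ico (0:ℝ) (2 * Real.pi))
    (hspec : ∀ n : ℕ, 1 ≤ n →
      IsQPEigenvalue q t (((2 * n * Real.pi - t) ^ 2 : ℝ) : ℂ)) :
    ∫ x in (0:ℝ)..1, q x = 0 := by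
  have hqi : IntervalIntegrable q volume 0 1 :=
    (intervalIntegrable_iff_integrableOn_Icc_of_le zero_le_one).2 hq
  set ω : ℕ → ℝ := fun n => 2 * n * Real.pi - t with hωdef
  have hω : Tendsto ω atTop atTop := by
    refine tendsto_atTop_add_const_right _ _ ?_
    exact (tendsto_natCast_atTop_atTop.const_mul_atTop two_pos).atTop_mul_const Real.pi_pos
  have h2ω : Tendsto (fun n => 2 * ω n) atTop atTop := hω.const_mul_atTop two_pos
  have hlim := (((tendsto_integral_mul_exp_cocompact q).comp
      (h2ω.mono_right atTop_le_cocompact)).norm.add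
    ((tendsto_integral_mul_exp_cocompact q).comp
      ((tendsto_neg_atTop_atBot.comp h2ω).mono_right atBot_le_cocompact)).norm).add
    (hω.const_div_atTop (4 * (∫ s in (0:ℝ)..1, |q s|) ^ 2))
  simp only [norm_zero, add_zero] at hlim
  have hnorm : ‖∫ s in (0:ℝ)..1, (q s : ℂ)‖ ≤ 0 := by
    refine ge_of_tendsto hlim ?_
    have hQ : ∀ᶠ n in atTop, ‖∫ s in (0:ℝ)..1, (q s : ℂ)‖ ≤ ‖(∫ s in (0:ℝ)..1, (q s : ℂ)) -
        2 * (Complex.I * ω n) * (Complex.exp (Complex.I * t) ^ 2 - 1)‖ := by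
      set c := Complex.exp (Complex.I * t) ^ 2 - 1
      set Q := ∫ s in (0:ℝ)..1, (q s : ℂ)
      rcases eq_or_ne c 0 with hc | hc
      · simp [hc]
      · have hcpos : 0 < ‖c‖ := norm_pos_iff.2 hc
        filter_upwards [hω.eventually_ge_atTop (‖Q‖ / ‖c‖), hω.eventually_ge_atTop 0]
          with n hn hn0
        rw [div_le_iff₀ hcpos] at hn
        have h1 := norm_sub_norm_le (2 * (Complex.I * (ω n : ℂ)) * c) Q
        rw [norm_sub_rev] at h1
        have h2 : ‖2 * (Complex.I * (ω n : ℂ)) * c‖ = 2 * (ω n * ‖c‖) := by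
          simp [abs_of_nonneg hn0, mul_assoc]
        linarith
    filter_upwards [hQ, hω.eventually_gt_atTop 0, eventually_ge_atTop 1,
      hω.eventually_ge_atTop (2 * ∫ s in (0:ℝ)..1, |q s|)] with n hn hpos h1 hK
    refine (hspec n h1).norm_integral_le hqi hpos hK ?_ hn
    rw [← Complex.exp_add, Complex.exp_eq_one_iff]
    exact ⟨n, by simp only [hωdef]; push_cast; ring⟩
  have hzero := norm_le_zero_iff.1 hnorm
  rw [intervalIntegral.integral_ofReal] at hzero
  exact_mod_cast hzero
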